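/- Every biconnected outerplanar graph G with at least 3 vertices contains a good closed chain: a chain whose two endpoints are adjacent in G, such that the chain together with the edge between its endpoints bounds a face, and at least one endpoint has degree at most 4. -/

import Mathlib

open SimpleGraph

universe u₁ u₂

variable {V : Type u₁} {W : Type u₂}

/-- `H` is a minor of `G`: there is a branch decomposition, i.e. a partial map
assigning to some vertices of `G` a vertex of `H`, whose branch sets are
nonempty and connected, and such that every edge of `H` is realized by an
edge of `G` between the corresponding branch sets. -/
def IsMinorOf (H : SimpleGraph W) (G : SimpleGraph V) : Prop :=
  ∃ f : V → Option W,
    (∀ w : W, (G.induce {v | f v = some w}).Connected) ∧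
    (∀ w₁ w₂ : W, H.Adj w₁ w₂ →
      ∃ v₁ v₂ : V, f v₁ = some w₁ ∧ f v₂ = some w₂ ∧ G.Adj v₁ v₂)

/-- The cone over `G`: add a new apex vertex adjacent to all vertices of `G`. -/
def cone (G : SimpleGraph V) : SimpleGraph (Option V) :=
  SimpleGraph.fromRel (fun a b =>
    a = none ∨ ∃ u v : V, a = some u ∧ b = some v ∧ G.Adj u v)

/-- A graph is planar iff it has neither a `K₅` nor a `K₃,₃` minor (Wagner). -/
def Planar (G : SimpleGraph V) : Prop :=
  ¬ IsMinorOf (⊤ : SimpleGraph (Fin 5)) G ∧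
  ¬ IsMinorOf (completeBipartiteGraph (Fin 3) (Fin 3)) G

/-- A graph is outerplanar iff the cone over it is planar (equivalently, it
has a planar embedding with all vertices on the outer face). -/
def Outerplanar (G : SimpleGraph V) : Prop := Planar (cone G)

/-- `v` is a cut vertex of `G`: `G` is connected but deleting `v` disconnects it. -/
def IsCutVertex (G : SimpleGraph V) (v : V) : Prop :=
  G.Connected ∧ ¬ (G.induce {u | u ≠ v}).Connected

/-- `G` is biconnected: connected with no cut vertex. -/
def Biconnected (G : SimpleGraph V) : Prop :=
  G.Connected ∧ ∀ v : V, ¬ IsCutVertex G v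

/-- Degree of a vertex, as the cardinality of its neighbour set. -/
noncomputable def deg (G : SimpleGraph V) (v : V) : ℕ := (G.neighborSet v).ncard

/-- Two `a`-`b` walks are internally vertex-disjoint if they share no
vertices other than `a` and `b`. -/
def InternallyDisjoint {G : SimpleGraph V} {a b : V} (p q : G.Walk a b) : Prop :=
  ∀ w : V, w ∈ p.support → w ∈ q.support → w = a ∨ w = b

/-- A chain of `G` with endpoints `a` and `b`, represented by the path `p`
from `a` to `b`: all internal vertices have degree two, and either both
endpoints have degree greater than two (a path chain), or the chain is a
cycle of degree-two vertices, represented by a Hamiltonian-on-its-support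
path between two adjacent vertices `a` and `b` of the cycle. -/
def IsGraphChain (G : SimpleGraph V) {a b : V} (p : G.Walk a b) : Prop :=
  p.IsPath ∧ 2 ≤ p.length ∧
    (∀ v ∈ p.support, v ≠ a → v ≠ b → deg G v = 2) ∧
    ((2 < deg G a ∧ 2 < deg G b) ∨
      (G.Adj a b ∧ ∀ v ∈ p.support, deg G v = 2))

/-- The graph on the endpoints of the edges in `E'`, with edge set `E'`. -/
def graphOn (E' : Set (Sym2 V)) :
    SimpleGraph {v : V | ∃ e ∈ E', v ∈ e} :=
  (SimpleGraph.fromEdgeSet E').induce {v : V | ∃ e ∈ E', v ∈ e}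

/-!
A longest cycle of `G` is Hamiltonian: an ear attached at two consecutive vertices of a cycle makes
it longer, and an ear attached anywhere else yields a `K₂,₃` minor. All other edges are chords of
this cycle, and two crossing chords yield a `K₄` minor. An outerplanar graph has neither minor,
since the cones over `K₂,₃` and `K₄` contain `K₃,₃` and `K₅`.

An innermost chord bounds a face whose other vertices all have degree two, so it closes a chain. To
find one with an endpoint of degree at most four, take a shortest arc whose ends are adjacent and
which has a chord inside it (if there is none, `G` is a cycle). The chords inside that arc are
innermost, so a vertex strictly inside it has, besides its two neighbours on the cycle, at most one
neighbour along a chord in either direction. Every chord inside the arc has such an endpoint.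
-/

section Minors

theorem isMinorOf_of_branchSets {H : SimpleGraph W} {G : SimpleGraph V} (B : W → Set V)
    (hdisj : Pairwise (Function.onFun Disjoint B)) (hconn : ∀ w, (G.induce (B w)).Connected)
    (hadj : ∀ w₁ w₂, H.Adj w₁ w₂ → ∃ v₁ ∈ B w₁, ∃ v₂ ∈ B w₂, G.Adj v₁ v₂) :
    IsMinorOf H G := by
  have exists_label (v : V) : ∃ o : Option W, ∀ w, o = some w ↔ v ∈ B w := by
    by_cases hv : ∃ w, v ∈ B w
    · obtain ⟨w, hw⟩ := hv
      refine ⟨some w, fun w' => ⟨fun h => Option.some.inj h ▸ hw, fun hw' => ?_⟩⟩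
      by_contra hne
      exact (hdisj (fun h => hne (congrArg some h))).notMem_of_mem_left hw hw'
    · exact ⟨none, fun w => ⟨nofun, fun hw => (hv ⟨w, hw⟩).elim⟩⟩
  choose f hf using exists_label
  refine ⟨f, fun w => ?_, fun w₁ w₂ h => ?_⟩
  · rw [show {v | f v = some w} = B w from Set.ext fun v => hf v w]
    exact hconn w
  · obtain ⟨v₁, h₁, v₂, h₂, h₁₂⟩ := hadj w₁ w₂ h
    exact ⟨v₁, v₂, (hf _ _).2 h₁, (hf _ _).2 h₂, h₁₂⟩

theorem IsMinorOf.of_isContained {U : Type*} {H' : SimpleGraph U} {H : SimpleGraph W}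
    {G : SimpleGraph V} (hH : H' ⊑ H) (h : IsMinorOf H G) : IsMinorOf H' G := by
  obtain ⟨φ⟩ := hH
  obtain ⟨f, hconn, hadj⟩ := h
  refine isMinorOf_of_branchSets (fun u => {v | f v = some (φ u)}) ?_ (fun u => hconn (φ u)) ?_
  · refine fun u₁ u₂ hne => Set.disjoint_left.2 fun v h₁ h₂ => hne (φ.injective ?_)
    exact Option.some.inj (h₁.symm.trans h₂)
  · intro u₁ u₂ h
    obtain ⟨v₁, v₂, h₁, h₂, h₁₂⟩ := hadj _ _ (φ.toHom.map_adj h)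
    exact ⟨v₁, h₁, v₂, h₂, h₁₂⟩

theorem connected_induce_singleton (G : SimpleGraph V) (v : V) : (G.induce {v}).Connected :=
  { preconnected := .of_subsingleton, nonempty := inferInstance }

theorem connected_induce_image {G : SimpleGraph V} {G' : SimpleGraph W} (φ : G →g G') {s : Set V}
    (h : (G.induce s).Connected) : (G'.induce (φ '' s)).Connected :=
  h.map (induceHom φ (Set.mapsTo_image φ s)) (Set.surjective_mapsTo_image_restrict φ s)

theorem isMinorOf_top_of_branchSets [LinearOrder W] {G : SimpleGraph V} (B : W → Set V)
    (hdisj : ∀ ⦃s t⦄, s < t → Disjoint (B s) (B t)) (hconn : ∀ t, (G.induce (B t)).Connected)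
    (hadj : ∀ ⦃s t⦄, s < t → ∃ u ∈ B s, ∃ v ∈ B t, G.Adj u v) :
    IsMinorOf (⊤ : SimpleGraph W) G := by
  refine isMinorOf_of_branchSets B ((pairwise_disjoint_on B).2 hdisj) hconn fun s t hst => ?_
  rcases hst.ne.lt_or_gt with h | h
  · exact hadj h
  · obtain ⟨u, hu, v, hv, huv⟩ := hadj h
    exact ⟨v, hv, u, hu, huv.symm⟩

theorem isMinorOf_completeBipartiteGraph_of_branchSets {α β : Type*} {G : SimpleGraph V}
    (A : α → Set V) (B : β → Set V) (hA : Pairwise (Function.onFun Disjoint A))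
    (hB : Pairwise (Function.onFun Disjoint B)) (hAB : ∀ a b, Disjoint (A a) (B b))
    (hAconn : ∀ a, (G.induce (A a)).Connected) (hBconn : ∀ b, (G.induce (B b)).Connected)
    (hadj : ∀ a b, ∃ u ∈ A a, ∃ v ∈ B b, G.Adj u v) :
    IsMinorOf (completeBipartiteGraph α β) G := by
  refine isMinorOf_of_branchSets (Sum.elim A B) ?_ (Sum.rec hAconn hBconn) ?_
  · rintro (a | b) (a' | b') hne
    · exact hA fun h => hne (congrArg _ h)
    · exact hAB a b'
    · exact (hAB a' b).symm
    · exact hB fun h => hne (congrArg _ h)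
  · rintro (a | b) (a' | b') h
    · simp at h
    · exact hadj a b'
    · obtain ⟨u, hu, v, hv, huv⟩ := hadj a' b
      exact ⟨v, hv, u, hu, huv.symm⟩
    · simp at h

end Minors

section Cone

@[simp]
theorem cone_adj_some_some {G : SimpleGraph V} {u v : V} :
    (cone G).Adj (some u) (some v) ↔ G.Adj u v := by
  simpa [cone, G.adj_comm v u] using G.ne_of_adj

@[simp]
theorem cone_adj_none_some {G : SimpleGraph V} {v : V} : (cone G).Adj none (some v) := by
  simp [cone]

@[simp]
theorem cone_adj_some_none {G : SimpleGraph V} {v : V} : (cone G).Adj (some v) none :=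
  cone_adj_none_some.symm

theorem IsMinorOf.cone {H : SimpleGraph W} {G : SimpleGraph V} (h : IsMinorOf H G) :
    IsMinorOf (cone H) (cone G) := by
  obtain ⟨f, hconn, hadj⟩ := h
  let base : G →g _root_.cone G := ⟨some, cone_adj_some_some.2⟩
  have exists_mem (w : W) : ∃ v, f v = some w := (hconn w).nonempty.elim fun v => ⟨v, v.2⟩
  refine isMinorOf_of_branchSets
    (fun o => o.elim {none} fun w => base '' {v | f v = some w}) ?_ ?_ ?_
  · rintro (_ | w) (_ | w') hne
    · exact (hne rfl).elim
    · simp [Function.onFun, base]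
    · simp [Function.onFun, base]
    · refine (Set.disjoint_image_iff (Option.some_injective V)).2 (Set.disjoint_left.2 ?_)
      exact fun v h₁ h₂ => hne (h₁.symm.trans h₂)
  · rintro (_ | w)
    · exact connected_induce_singleton _ _
    · exact connected_induce_image base (hconn w)
  · rintro (_ | w) (_ | w') hww'
    · simp at hww'
    · obtain ⟨v, hv⟩ := exists_mem w'
      exact ⟨none, rfl, some v, ⟨v, hv, rfl⟩, cone_adj_none_some⟩
    · obtain ⟨v, hv⟩ := exists_mem w
      exact ⟨some v, ⟨v, hv, rfl⟩, none, rfl, cone_adj_some_none⟩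
    · obtain ⟨v, v', hv, hv', hvv'⟩ := hadj w w' (cone_adj_some_some.1 hww')
      exact ⟨some v, ⟨v, hv, rfl⟩, some v', ⟨v', hv', rfl⟩, cone_adj_some_some.2 hvv'⟩

theorem top_isContained_cone_top (n : ℕ) :
    (⊤ : SimpleGraph (Fin (n + 1))) ⊑ cone (⊤ : SimpleGraph (Fin n)) := by
  refine ⟨⟨⟨finSuccEquiv n, fun {i j} => ?_⟩, (finSuccEquiv n).injective⟩⟩
  cases i using Fin.cases <;> cases j using Fin.cases <;> simp

theorem completeBipartiteGraph_isContained_cone (n : ℕ) (W : Type*) :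
    completeBipartiteGraph (Fin (n + 1)) W ⊑ cone (completeBipartiteGraph (Fin n) W) := by
  let f : Fin (n + 1) ⊕ W → Option (Fin n ⊕ W) :=
    Sum.elim (fun i => (finSuccEquiv n i).map Sum.inl) (some ∘ Sum.inr)
  refine ⟨⟨⟨f, ?_⟩, ?_⟩⟩
  · rintro (i | w) (j | w') h
    · simp at h
    · cases i using Fin.cases <;> simp [f]
    · cases j using Fin.cases <;> simp [f]
    · simp at h
  · rintro (i | w) (j | w') h
    · simpa [f, (Option.map_injective Sum.inl_injective).eq_iff] using h
    · cases i using Fin.cases <;> simp [f] at h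
    · cases j using Fin.cases <;> simp [f] at h
    · simpa [f] using h

theorem Outerplanar.not_isMinorOf_K₄ {G : SimpleGraph V} (hO : Outerplanar G) :
    ¬ IsMinorOf (⊤ : SimpleGraph (Fin 4)) G :=
  fun h => hO.1 (h.cone.of_isContained (top_isContained_cone_top 4))

theorem Outerplanar.not_isMinorOf_K₂₃ {G : SimpleGraph V} (hO : Outerplanar G) :
    ¬ IsMinorOf (completeBipartiteGraph (Fin 2) (Fin 3)) G :=
  fun h => hO.2 (h.cone.of_isContained (completeBipartiteGraph_isContained_cone 2 (Fin 3)))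

end Cone

section Ears

theorem exists_adj_notMem_of_connected {G : SimpleGraph V} (hG : G.Connected) {S : Set V}
    (hS : S.Nonempty) (hS' : S ≠ Set.univ) : ∃ u ∈ S, ∃ v ∉ S, G.Adj u v := by
  obtain ⟨u, hu⟩ := hS
  obtain ⟨v, hv⟩ := (Set.ne_univ_iff_exists_notMem S).1 hS'
  obtain ⟨p⟩ := hG.preconnected u v
  obtain ⟨d, -, hfst, hsnd⟩ := p.exists_boundary_dart S hu hv
  exact ⟨_, hfst, _, hsnd, d.adj⟩

theorem Biconnected.connected_induce_ne {G : SimpleGraph V} (hB : Biconnected G) (v : V) :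
    (G.induce {u | u ≠ v}).Connected :=
  not_not.1 fun h => hB.2 v ⟨hB.1, h⟩

theorem exists_isPath_of_reachable_induce {G : SimpleGraph V} {s : Set V} {u v : s}
    (h : (G.induce s).Reachable u v) :
    ∃ p : G.Walk u v, p.IsPath ∧ ∀ w ∈ p.support, w ∈ s := by
  obtain ⟨p, hp⟩ := h.exists_isPath
  refine ⟨p.map (Embedding.induce s).toHom, hp.map Subtype.val_injective, fun w hw => ?_⟩
  obtain ⟨w', -, rfl⟩ := List.mem_map.1 (Walk.support_map _ p ▸ hw)
  exact w'.2

theorem Biconnected.exists_ear {G : SimpleGraph V} (hB : Biconnected G) {K : Set V}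
    (hK : K.Nontrivial) (hKuniv : K ≠ Set.univ) :
    ∃ x ∈ K, ∃ y ∈ K, x ≠ y ∧ ∃ (u v : V) (p : G.Walk u v),
      p.IsPath ∧ (∀ w ∈ p.support, w ∉ K) ∧ G.Adj x u ∧ G.Adj y v := by
  obtain ⟨v₀, hv₀⟩ := (Set.ne_univ_iff_exists_notMem K).1 hKuniv
  -- A component of the complement of `K` attached only at `x` would be cut off by deleting `x`.
  let C := G.componentComplMk hv₀
  obtain ⟨⟨u, x⟩, hu, hx, hux⟩ := C.exists_adj_boundary_pair hB.1.preconnected hK.nonempty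
  obtain ⟨z, hz, hzx⟩ := hK.exists_ne x
  obtain ⟨⟨v, _⟩, hv, ⟨y, hyx⟩, hy, hvy⟩ :=
    exists_adj_notMem_of_connected (hB.connected_induce_ne x) (S := {w | w.1 ∈ C})
      ⟨⟨u, hux.ne⟩, hu⟩
      ((Set.ne_univ_iff_exists_notMem _).2 ⟨⟨z, hzx⟩, fun h => C.notMem_of_mem h hz⟩)
  have hyK : y ∈ K := not_not.1 fun h => hy (ComponentCompl.mem_of_adj v y hv h hvy)
  obtain ⟨p, hp, hpK⟩ :=
    exists_isPath_of_reachable_induce (ConnectedComponent.eq.1 (hu.2.trans hv.2.symm))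
  exact ⟨x, hx, y, hyK, Ne.symm hyx, u, v, p, hp, hpK, hux.symm, G.adj_symm hvy⟩

end Ears

/-- `c : ℤ → V` runs around a cycle of `G` with `n` vertices, repeating itself with period `n`;
indexing by `ℤ` turns arcs of the cycle into integer intervals. The case `n = 2`, an edge traversed
back and forth, is allowed, so that a longest cycle can be grown from any edge. -/
structure IsUnrolledCycle (G : SimpleGraph V) (n : ℕ) (c : ℤ → V) : Prop where
  two_le : 2 ≤ n
  adj_add_one : ∀ i, G.Adj (c i) (c (i + 1))
  apply_eq_apply_iff : ∀ i j, c i = c j ↔ i ≡ j [ZMOD n]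

namespace IsUnrolledCycle

variable {G : SimpleGraph V} {n : ℕ} {c : ℤ → V}

theorem of_isPath {a b : V} {p : G.Walk a b} (hp : p.IsPath) (hba : G.Adj b a) :
    IsUnrolledCycle G (p.length + 1) fun i => p.getVert (i % (p.length + 1 : ℕ)).toNat := by
  have hlen : p.length ≠ 0 := fun h => hba.ne' (Walk.eq_of_length_eq_zero h)
  generalize hN : ((p.length + 1 : ℕ) : ℤ) = N
  have emod_nonneg (i : ℤ) : 0 ≤ i % N := Int.emod_nonneg i (by lia)
  have emod_lt (i : ℤ) : i % N < N := Int.emod_lt_of_pos i (by lia)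
  refine ⟨by lia, fun i => ?_, fun i j => ?_⟩
  · have hi := emod_lt i
    rw [← Int.emod_add_emod]
    rcases (show i % N + 1 ≤ N by lia).lt_or_eq with hlt | heq
    · rw [Int.emod_eq_of_lt (Int.add_nonneg (emod_nonneg i) zero_le_one) hlt,
        Int.toNat_add (emod_nonneg i) zero_le_one]
      exact p.adj_getVert_succ (by lia)
    · have hlast : (i % N).toNat = p.length := by lia
      rw [heq, Int.emod_self, hlast, p.getVert_length]
      simpa using hba
  · have toNat_le (k : ℤ) : (k % N).toNat ≤ p.length := by have := emod_lt k; lia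
    rw [hp.getVert_injOn.eq_iff (toNat_le i) (toNat_le j), hN, Int.ModEq,
      ← Int.ofNat_inj, Int.toNat_of_nonneg (emod_nonneg i), Int.toNat_of_nonneg (emod_nonneg j)]

theorem periodic (h : IsUnrolledCycle G n c) : Function.Periodic c n :=
  fun i => (h.apply_eq_apply_iff _ _).2 (by simp [Int.ModEq])

theorem adj_sub_one (h : IsUnrolledCycle G n c) (i : ℤ) : G.Adj (c i) (c (i - 1)) := by
  simpa using (h.adj_add_one (i - 1)).symm

theorem ne (h : IsUnrolledCycle G n c) {i j : ℤ} (hij : i < j) (hji : j < i + n) : c i ≠ c j := by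
  intro heq
  have hdvd : (n : ℤ) ∣ j - i := ((h.apply_eq_apply_iff i j).1 heq).dvd
  have := Int.eq_zero_of_dvd_of_nonneg_of_lt (by lia) (by lia) hdvd
  lia

theorem injOn_Ico (h : IsUnrolledCycle G n c) (i : ℤ) : Set.InjOn c (Set.Ico i (i + n)) := by
  rintro j ⟨hj, hj'⟩ k ⟨hk, hk'⟩ heq
  by_contra hne
  rcases lt_or_gt_of_ne hne with hlt | hlt
  · exact h.ne hlt (by lia) heq
  · exact h.ne hlt (by lia) heq.symm

theorem exists_mem_Ico (h : IsUnrolledCycle G n c) (i j : ℤ) :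
    ∃ k ∈ Set.Ico i (i + n), c j = c k :=
  h.periodic.exists_mem_Ico (by have := h.two_le; lia) j i

theorem image_Ico (h : IsUnrolledCycle G n c) (i : ℤ) :
    c '' Set.Ico i (i + n) = Set.range c := by
  refine (Set.image_subset_range _ _).antisymm (Set.range_subset_iff.2 fun j => ?_)
  obtain ⟨k, hk, hjk⟩ := h.exists_mem_Ico i j
  exact ⟨k, hk, hjk.symm⟩

theorem ncard_range (h : IsUnrolledCycle G n c) : (Set.range c).ncard = n := by
  rw [← h.image_Ico 0, (h.injOn_Ico 0).ncard_image, ← Finset.coe_Ico,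
    Set.ncard_coe_finset, Int.card_Ico]
  simp

theorem disjoint_arcs (h : IsUnrolledCycle G n c) {i j k l : ℤ} (hjk : j < k) (hli : l < i + n) :
    Disjoint (c '' Set.Icc i j) (c '' Set.Icc k l) := by
  rw [Set.disjoint_left]
  rintro _ ⟨s, ⟨his, hsj⟩, rfl⟩ ⟨t, ⟨hkt, htl⟩, hts⟩
  exact h.ne (by lia) (by lia) hts.symm

theorem exists_isPath_arc (h : IsUnrolledCycle G n c) {i j : ℤ} (hij : i ≤ j) (hji : j < i + n) :
    ∃ p : G.Walk (c i) (c j), p.IsPath ∧ p.length = j - i ∧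
      {v | v ∈ p.support} = c '' Set.Icc i j := by
  induction j, hij using Int.leInduction with
  | base => exact ⟨.nil, .nil, by simp, by simp⟩
  | succ j hij ih =>
    obtain ⟨p, hp, hlen, hsupp⟩ := ih (by lia)
    have hnew : c (j + 1) ∉ p.support := by
      change c (j + 1) ∉ {v | v ∈ p.support}
      rw [hsupp]
      rintro ⟨k, ⟨hik, hkj⟩, hk⟩
      exact h.ne (by lia) (by lia) hk
    refine ⟨p.concat (h.adj_add_one j), hp.concat hnew _, by simp [hlen]; lia, ?_⟩
    have hIcc : Set.Icc i (j + 1) = insert (j + 1) (Set.Icc i j) := by grind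
    rw [hIcc, Set.image_insert_eq, ← hsupp]
    ext v
    simp [Walk.support_concat, or_comm]

theorem connected_induce_arc (h : IsUnrolledCycle G n c) {i j : ℤ} (hij : i ≤ j)
    (hji : j < i + n) : (G.induce (c '' Set.Icc i j)).Connected := by
  obtain ⟨p, -, -, hsupp⟩ := h.exists_isPath_arc hij hji
  exact hsupp ▸ p.connected_induce_support

theorem isMinorOf_K₄_of_crossing (h : IsUnrolledCycle G n c) {i j k l : ℤ} (hij : i < j)
    (hjk : j < k) (hkl : k < l) (hli : l < i + n) (hik : G.Adj (c i) (c k))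
    (hjl : G.Adj (c j) (c l)) : IsMinorOf (⊤ : SimpleGraph (Fin 4)) G := by
  have hil : G.Adj (c i) (c (i + n - 1)) := by
    simpa only [h.periodic i] using h.adj_sub_one (i + n)
  refine isMinorOf_top_of_branchSets ![c '' Set.Icc i (j - 1), c '' Set.Icc j (k - 1),
    c '' Set.Icc k (l - 1), c '' Set.Icc l (i + n - 1)] ?_ ?_ ?_
  · intro s t hst
    fin_cases s <;> fin_cases t <;>
      first | exact absurd hst (by decide) | exact h.disjoint_arcs (by lia) (by lia)
  · intro t
    fin_cases t <;> exact h.connected_induce_arc (by lia) (by lia)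
  · have adj_arcs {a b a' b' : ℤ} (s t : ℤ) (hst : G.Adj (c s) (c t)) (hs : a ≤ s ∧ s ≤ b)
        (ht : a' ≤ t ∧ t ≤ b') : ∃ u ∈ c '' Set.Icc a b, ∃ v ∈ c '' Set.Icc a' b', G.Adj u v :=
      ⟨c s, ⟨s, hs, rfl⟩, c t, ⟨t, ht, rfl⟩, hst⟩
    intro s t hst
    fin_cases s <;> fin_cases t <;> try exact absurd hst (by decide)
    · exact adj_arcs _ _ (h.adj_sub_one j).symm (by lia) (by lia)
    · exact adj_arcs _ _ hik (by lia) (by lia)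
    · exact adj_arcs _ _ hil (by lia) (by lia)
    · exact adj_arcs _ _ (h.adj_sub_one k).symm (by lia) (by lia)
    · exact adj_arcs _ _ hjl (by lia) (by lia)
    · exact adj_arcs _ _ (h.adj_sub_one l).symm (by lia) (by lia)

theorem isMinorOf_K₂₃_of_ear (h : IsUnrolledCycle G n c) {i j : ℤ} (hij : i + 2 ≤ j)
    (hji : j + 2 ≤ i + n) {u v : V} (p : G.Walk u v) (hp : ∀ w ∈ p.support, w ∉ Set.range c)
    (hiu : G.Adj (c i) u) (hjv : G.Adj (c j) v) :
    IsMinorOf (completeBipartiteGraph (Fin 2) (Fin 3)) G := by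
  have disjoint_ear (s : Set ℤ) : Disjoint {w | w ∈ p.support} (c '' s) :=
    Set.disjoint_left.2 fun w hw hws => hp w hw (Set.image_subset_range c s hws)
  have hil : G.Adj (c i) (c (i + n - 1)) := by
    simpa only [h.periodic i] using h.adj_sub_one (i + n)
  refine isMinorOf_completeBipartiteGraph_of_branchSets ![c '' Set.Icc i i, c '' Set.Icc j j]
    ![{w | w ∈ p.support}, c '' Set.Icc (i + 1) (j - 1), c '' Set.Icc (j + 1) (i + n - 1)]
    ((pairwise_disjoint_on _).2 ?_) ((pairwise_disjoint_on _).2 ?_) ?_ ?_ ?_ ?_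
  · intro s t hst
    fin_cases s <;> fin_cases t <;> try exact absurd hst (by decide)
    exact h.disjoint_arcs (by lia) (by lia)
  · intro s t hst
    fin_cases s <;> fin_cases t <;> try exact absurd hst (by decide)
    exacts [disjoint_ear _, disjoint_ear _, h.disjoint_arcs (by lia) (by lia)]
  · intro s t
    fin_cases s <;> fin_cases t
    · exact (disjoint_ear _).symm
    · exact h.disjoint_arcs (by lia) (by lia)
    · exact h.disjoint_arcs (by lia) (by lia)
    · exact (disjoint_ear _).symm
    · exact (h.disjoint_arcs (by lia) (by lia)).symm
    · exact h.disjoint_arcs (by lia) (by lia)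
  · intro s
    fin_cases s <;> exact h.connected_induce_arc (by lia) (by lia)
  · intro t
    fin_cases t
    · exact p.connected_induce_support
    · exact h.connected_induce_arc (by lia) (by lia)
    · exact h.connected_induce_arc (by lia) (by lia)
  · intro s t
    refine ⟨![c i, c j] s, by fin_cases s <;> simp, ?_⟩
    fin_cases s <;> fin_cases t
    · exact ⟨u, p.start_mem_support, hiu⟩
    · exact ⟨c (i + 1), ⟨i + 1, ⟨by lia, by lia⟩, rfl⟩, h.adj_add_one i⟩
    · exact ⟨c (i + n - 1), ⟨i + n - 1, ⟨by lia, by lia⟩, rfl⟩, hil⟩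
    · exact ⟨v, p.end_mem_support, hjv⟩
    · exact ⟨c (j - 1), ⟨j - 1, ⟨by lia, by lia⟩, rfl⟩, h.adj_sub_one j⟩
    · exact ⟨c (j + 1), ⟨j + 1, ⟨by lia, by lia⟩, rfl⟩, h.adj_add_one j⟩

theorem exists_longer_of_ear (h : IsUnrolledCycle G n c) {k : ℤ} {u v : V} {p : G.Walk u v}
    (hp : p.IsPath) (hpc : ∀ w ∈ p.support, w ∉ Set.range c) (hu : G.Adj (c k) u)
    (hv : G.Adj (c (k + 1)) v) : ∃ m > n, ∃ c', IsUnrolledCycle G m c' := by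
  have := h.two_le
  obtain ⟨q, hq, hlen, hsupp⟩ := h.exists_isPath_arc (i := k + 1) (j := k + n) (by lia) (by lia)
  have hjoin : G.Adj (c (k + n)) u := by rwa [h.periodic k]
  have hqp : (q.append (.cons hjoin p)).IsPath := by
    rw [Walk.isPath_def, Walk.support_append, Walk.support_cons, List.tail_cons,
      List.nodup_append']
    refine ⟨hq.support_nodup, hp.support_nodup, fun w hwq hwp => hpc w hwp ?_⟩
    exact Set.image_subset_range c _ (hsupp ▸ hwq : w ∈ c '' Set.Icc (k + 1) (k + n))
  refine ⟨_, ?_, _, of_isPath hqp hv.symm⟩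
  rw [Walk.length_append, Walk.length_cons]
  lia

theorem exists_longer (h : IsUnrolledCycle G n c) (hB : Biconnected G)
    (hK₂₃ : ¬ IsMinorOf (completeBipartiteGraph (Fin 2) (Fin 3)) G) (hc : Set.range c ≠ Set.univ) :
    ∃ m > n, ∃ c', IsUnrolledCycle G m c' := by
  have hnontrivial : (Set.range c).Nontrivial := ⟨_, ⟨0, rfl⟩, _, ⟨1, rfl⟩, (h.adj_add_one 0).ne⟩
  obtain ⟨_, ⟨i, rfl⟩, _, ⟨j, rfl⟩, hij, u, v, p, hp, hpc, hiu, hjv⟩ := hB.exists_ear hnontrivial hc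
  obtain ⟨k, ⟨hik, hki⟩, hjk⟩ := h.exists_mem_Ico i j
  rw [hjk] at hij hjv
  have hne : i ≠ k := fun hik => hij (congrArg c hik)
  obtain rfl | hk | ⟨hik, hki⟩ :
      k = i + 1 ∨ k + 1 = i + n ∨ i + 2 ≤ k ∧ k + 2 ≤ i + n := by lia
  · exact h.exists_longer_of_ear hp hpc hiu hjv
  · have hku : G.Adj (c (k + 1)) u := by rwa [hk, h.periodic i]
    exact h.exists_longer_of_ear hp.reverse (by simpa using hpc) hjv hku
  · exact absurd (h.isMinorOf_K₂₃_of_ear hik hki p hpc hiu hjv) hK₂₃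

theorem exists_surjective [Finite V] [Nontrivial V] (hB : Biconnected G)
    (hK₂₃ : ¬ IsMinorOf (completeBipartiteGraph (Fin 2) (Fin 3)) G) :
    ∃ n c, IsUnrolledCycle G n c ∧ Function.Surjective c := by
  let lengths : Set ℕ := {n | ∃ c, IsUnrolledCycle G n c}
  have hfin : lengths.Finite := (Set.finite_Iic (Nat.card V)).subset <| by
    rintro n ⟨c, h⟩
    exact h.ncard_range ▸ Set.ncard_le_card _
  have hne : lengths.Nonempty := by
    obtain ⟨a⟩ := hB.1.nonempty
    obtain ⟨b, hab⟩ := hB.1.preconnected.exists_adj_of_nontrivial a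
    exact ⟨_, _, of_isPath hab.isPath_toWalk hab.symm⟩
  obtain ⟨n, ⟨c, h⟩, hmax⟩ := hfin.exists_maximal hne
  refine ⟨n, c, h, Set.range_eq_univ.1 (by_contra fun hc => ?_)⟩
  obtain ⟨m, hm, c', h'⟩ := h.exists_longer hB hK₂₃ hc
  exact hm.not_ge (hmax ⟨c', h'⟩ hm.le)

end IsUnrolledCycle

/-- The vertices `c i` and `c j` of an unrolled cycle are joined by an edge which, together with the
arc `c i, c (i + 1), …, c j`, bounds a polygon. Besides chords this includes every edge of the
cycle, closing up the arc that runs the other way round, so that `c 0` and `c (n - 1)` need not be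
treated separately. -/
structure IsSpan (G : SimpleGraph V) (n : ℕ) (c : ℤ → V) (i j : ℤ) : Prop where
  adj : G.Adj (c i) (c j)
  add_two_le : i + 2 ≤ j
  lt_add : j < i + n

/-- A span whose arc contains no other span, so that the arc and the closing edge bound a face. -/
structure IsInnermostSpan (G : SimpleGraph V) (n : ℕ) (c : ℤ → V) (i j : ℤ) : Prop
    extends IsSpan G n c i j where
  eq_of_le : ∀ k l, IsSpan G n c k l → i ≤ k → l ≤ j → k = i ∧ l = j

section Spans

variable {G : SimpleGraph V} {n : ℕ} {c : ℤ → V} {i j w : ℤ}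

theorem IsUnrolledCycle.isSpan_edge (h : IsUnrolledCycle G n c) (hn : 3 ≤ n) (i : ℤ) :
    IsSpan G n c i (i + n - 1) where
  adj := by simpa only [h.periodic i] using h.adj_sub_one (i + n)
  add_two_le := by lia
  lt_add := by lia

theorem IsSpan.complement (hs : IsSpan G n c i j) (h : IsUnrolledCycle G n c)
    (hji : j + 2 ≤ i + n) : IsSpan G n c j (i + n) where
  adj := by simpa only [h.periodic i] using hs.adj.symm
  add_two_le := hji
  lt_add := by have := hs.add_two_le; lia

theorem IsSpan.two_lt_deg_left [Finite V] (hs : IsSpan G n c i j) (h : IsUnrolledCycle G n c)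
    (hji : j + 2 ≤ i + n) : 2 < deg G (c i) := by
  have := hs.add_two_le
  refine (Set.two_lt_ncard_iff (Set.toFinite _)).2 ⟨c (i - 1), c (i + 1), c j,
    h.adj_sub_one i, h.adj_add_one i, hs.adj, ?_, ?_, ?_⟩ <;> exact h.ne (by lia) (by lia)

theorem IsSpan.two_lt_deg_right [Finite V] (hs : IsSpan G n c i j) (h : IsUnrolledCycle G n c)
    (hji : j + 2 ≤ i + n) : 2 < deg G (c j) :=
  (hs.complement h hji).two_lt_deg_left h (by have := hs.add_two_le; lia)

theorem IsSpan.neighborSet_subset_arc (hs : IsSpan G n c i j) (h : IsUnrolledCycle G n c)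
    (hc : Function.Surjective c) (hK₄ : ¬ IsMinorOf (⊤ : SimpleGraph (Fin 4)) G) (hiw : i < w)
    (hwj : w < j) : G.neighborSet (c w) ⊆ c '' Set.Icc i j := by
  intro v hv
  obtain ⟨t, rfl⟩ := hc v
  obtain ⟨k, ⟨hik, hki⟩, htk⟩ := h.exists_mem_Ico i t
  rw [htk] at hv ⊢
  refine ⟨k, ⟨hik, not_lt.1 fun hjk => hK₄ ?_⟩, rfl⟩
  exact h.isMinorOf_K₄_of_crossing hiw hwj hjk hki hs.adj hv

theorem IsSpan.neighborSet_subset (hs : IsSpan G n c i j) (h : IsUnrolledCycle G n c)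
    (hc : Function.Surjective c) (hK₄ : ¬ IsMinorOf (⊤ : SimpleGraph (Fin 4)) G) (hiw : i < w)
    (hwj : w < j) : G.neighborSet (c w) ⊆ {c (w - 1), c (w + 1)} ∪
      (c '' {k | i ≤ k ∧ IsSpan G n c k w} ∪ c '' {k | k ≤ j ∧ IsSpan G n c w k}) := by
  intro v hv
  obtain ⟨k, ⟨hik, hkj⟩, rfl⟩ := hs.neighborSet_subset_arc h hc hK₄ hiw hwj hv
  have hji := hs.lt_add
  have hkw : k ≠ w := fun hkw => G.ne_of_adj hv (congrArg c hkw.symm)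
  obtain hk | rfl | rfl | hk : k + 2 ≤ w ∨ k = w - 1 ∨ k = w + 1 ∨ w + 2 ≤ k := by lia
  · exact .inr (.inl ⟨k, ⟨hik, G.adj_symm hv, hk, by lia⟩, rfl⟩)
  · exact .inl (.inl rfl)
  · exact .inl (.inr rfl)
  · exact .inr (.inr ⟨k, ⟨hkj, hv, hk, by lia⟩, rfl⟩)

theorem IsInnermostSpan.deg_eq_two (hs : IsInnermostSpan G n c i j) (h : IsUnrolledCycle G n c)
    (hc : Function.Surjective c) (hK₄ : ¬ IsMinorOf (⊤ : SimpleGraph (Fin 4)) G) (hiw : i < w)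
    (hwj : w < j) : deg G (c w) = 2 := by
  have hne : c (w - 1) ≠ c (w + 1) := by
    have := hs.add_two_le
    have := hs.lt_add
    exact h.ne (by lia) (by lia)
  suffices G.neighborSet (c w) = {c (w - 1), c (w + 1)} by rw [deg, this, Set.ncard_pair hne]
  refine Set.Subset.antisymm (fun v hv => ?_) ?_
  · obtain hv | ⟨k, ⟨hik, hkw⟩, rfl⟩ | ⟨k, ⟨hkj, hwk⟩, rfl⟩ :=
      hs.neighborSet_subset h hc hK₄ hiw hwj hv
    · exact hv
    · have := hs.eq_of_le k w hkw hik hwj.le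
      lia
    · have := hs.eq_of_le w k hwk hiw.le hkj
      lia
  · rintro _ (rfl | rfl)
    exacts [h.adj_sub_one w, h.adj_add_one w]

theorem IsSpan.deg_le_four [Finite V] (hs : IsSpan G n c i j) (h : IsUnrolledCycle G n c)
    (hc : Function.Surjective c) (hK₄ : ¬ IsMinorOf (⊤ : SimpleGraph (Fin 4)) G)
    (hshort : ∀ k l, IsSpan G n c k l → l - k < j - i → IsInnermostSpan G n c k l) (hiw : i < w)
    (hwj : w < j) : deg G (c w) ≤ 4 := by
  let backward : Set ℤ := {k | i ≤ k ∧ IsSpan G n c k w}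
  let forward : Set ℤ := {k | k ≤ j ∧ IsSpan G n c w k}
  have hbackward : backward.Subsingleton := by
    rintro k ⟨hk, hkw⟩ l ⟨hl, hlw⟩
    rcases le_total k l with hkl | hlk
    · exact ((hshort k w hkw (by lia)).eq_of_le l w hlw hkl le_rfl).1.symm
    · exact ((hshort l w hlw (by lia)).eq_of_le k w hkw hlk le_rfl).1
  have hforward : forward.Subsingleton := by
    rintro k ⟨hk, hwk⟩ l ⟨hl, hwl⟩
    rcases le_total k l with hkl | hlk
    · exact ((hshort w l hwl (by lia)).eq_of_le w k hwk le_rfl hkl).2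
    · exact ((hshort w k hwk (by lia)).eq_of_le w l hwl le_rfl hlk).2.symm
  calc deg G (c w)
      ≤ ({c (w - 1), c (w + 1)} ∪ (c '' backward ∪ c '' forward)).ncard :=
        Set.ncard_le_ncard (hs.neighborSet_subset h hc hK₄ hiw hwj)
    _ ≤ ({c (w - 1), c (w + 1)} : Set V).ncard + ((c '' backward).ncard + (c '' forward).ncard) :=
        (Set.ncard_union_le _ _).trans (Nat.add_le_add_left (Set.ncard_union_le _ _) _)
    _ ≤ 2 + (1 + 1) := by
        gcongr
        · exact (Set.ncard_insert_le _ _).trans_eq (by rw [Set.ncard_singleton])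
        · exact Set.ncard_le_one_iff_subsingleton.2 (hbackward.image c)
        · exact Set.ncard_le_one_iff_subsingleton.2 (hforward.image c)

theorem IsInnermostSpan.exists_isGraphChain (hs : IsInnermostSpan G n c i j)
    (h : IsUnrolledCycle G n c) (hc : Function.Surjective c)
    (hK₄ : ¬ IsMinorOf (⊤ : SimpleGraph (Fin 4)) G)
    (hends : 2 < deg G (c i) ∧ 2 < deg G (c j) ∨ deg G (c i) = 2 ∧ deg G (c j) = 2) :
    ∃ p : G.Walk (c i) (c j), IsGraphChain G p := by
  have hij := hs.add_two_le
  obtain ⟨p, hp, hlen, hsupp⟩ := h.exists_isPath_arc (by lia : i ≤ j) hs.lt_add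
  have hinner (v : V) (hv : v ∈ p.support) (hvi : v ≠ c i) (hvj : v ≠ c j) : deg G v = 2 := by
    obtain ⟨k, ⟨hik, hkj⟩, rfl⟩ : v ∈ c '' Set.Icc i j := hsupp ▸ hv
    exact hs.deg_eq_two h hc hK₄ (hik.lt_of_ne fun hik => hvi (congrArg c hik.symm))
      (hkj.lt_of_ne fun hkj => hvj (congrArg c hkj))
  refine ⟨p, hp, by lia, hinner, hends.imp_right fun ⟨hi, hj⟩ => ⟨hs.adj, fun v hv => ?_⟩⟩
  by_cases hvi : v = c i
  · exact hvi ▸ hi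
  by_cases hvj : v = c j
  · exact hvj ▸ hj
  exact hinner v hv hvi hvj

theorem deg_eq_two_of_forall_isInnermostSpan (h : IsUnrolledCycle G n c) (hn : 3 ≤ n)
    (hc : Function.Surjective c) (hK₄ : ¬ IsMinorOf (⊤ : SimpleGraph (Fin 4)) G)
    (hall : ∀ i j, IsSpan G n c i j → IsInnermostSpan G n c i j) (w : ℤ) : deg G (c w) = 2 :=
  (hall _ _ (h.isSpan_edge hn (w - 1))).deg_eq_two h hc hK₄ (by lia) (by lia)

theorem exists_isInnermostSpan_deg_le_four [Finite V] (h : IsUnrolledCycle G n c)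
    (hc : Function.Surjective c) (hK₄ : ¬ IsMinorOf (⊤ : SimpleGraph (Fin 4)) G)
    (hs : IsSpan G n c i j) (hs' : ¬ IsInnermostSpan G n c i j) :
    ∃ k l, IsInnermostSpan G n c k l ∧ l + 2 ≤ k + n ∧ (deg G (c k) ≤ 4 ∨ deg G (c l) ≤ 4) := by
  obtain ⟨⟨i, j⟩, ⟨hs, hs'⟩, hmin⟩ := exists_minimalFor_of_wellFoundedLT
    (fun s : ℤ × ℤ => IsSpan G n c s.1 s.2 ∧ ¬ IsInnermostSpan G n c s.1 s.2)
    (fun s => (s.2 - s.1).toNat) ⟨(i, j), hs, hs'⟩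
  have hshort (k l : ℤ) (hkl : IsSpan G n c k l) (hlt : l - k < j - i) :
      IsInnermostSpan G n c k l := by
    by_contra hkl'
    have : (j - i).toNat ≤ (l - k).toNat := hmin (j := (k, l)) ⟨hkl, hkl'⟩ (by lia)
    have := hkl.add_two_le
    lia
  obtain ⟨k, l, hkl, hik, hlj, hne⟩ :
      ∃ k l, IsSpan G n c k l ∧ i ≤ k ∧ l ≤ j ∧ ¬(k = i ∧ l = j) := by
    by_contra! hall
    exact hs' ⟨hs, hall⟩
  have := hs.lt_add
  have := hkl.add_two_le
  refine ⟨k, l, hshort k l hkl (by lia), by lia, ?_⟩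
  obtain hik | hlj : i < k ∨ l < j := by lia
  · exact .inl (hs.deg_le_four h hc hK₄ hshort hik (by lia))
  · exact .inr (hs.deg_le_four h hc hK₄ hshort (by lia) hlj)

end Spans

/-- Every biconnected outerplanar graph with at least three vertices contains
a good closed chain: a chain whose endpoints are adjacent (so that the chain
together with this edge bounds a face) and one of whose endpoints has degree
at most four. -/
theorem exists_good_closed_chain [Fintype V] {G : SimpleGraph V}
    (hB : Biconnected G) (hO : Outerplanar G) (h3 : 3 ≤ Fintype.card V) :
    ∃ (a b : V) (p : G.Walk a b), IsGraphChain G p ∧ G.Adj a b ∧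
      (deg G a ≤ 4 ∨ deg G b ≤ 4) := by
  have hK₄ := hO.not_isMinorOf_K₄
  have : Nontrivial V := Fintype.one_lt_card_iff_nontrivial.1 (by lia)
  obtain ⟨n, c, h, hc⟩ := IsUnrolledCycle.exists_surjective hB hO.not_isMinorOf_K₂₃
  have hn : 3 ≤ n := by
    rwa [← h.ncard_range, hc.range_eq, Set.ncard_univ, Nat.card_eq_fintype_card]
  by_cases hall : ∀ i j, IsSpan G n c i j → IsInnermostSpan G n c i j
  · have hdeg := deg_eq_two_of_forall_isInnermostSpan h hn hc hK₄ hall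
    have hs := hall _ _ (h.isSpan_edge hn 0)
    obtain ⟨p, hp⟩ := hs.exists_isGraphChain h hc hK₄ (.inr ⟨hdeg _, hdeg _⟩)
    exact ⟨_, _, p, hp, hs.adj, .inl ((hdeg _).trans_le (by lia))⟩
  · push Not at hall
    obtain ⟨i, j, hij, hij'⟩ := hall
    obtain ⟨k, l, hs, hlk, hdeg⟩ := exists_isInnermostSpan_deg_le_four h hc hK₄ hij hij'
    obtain ⟨p, hp⟩ := hs.exists_isGraphChain h hc hK₄
      (.inl ⟨hs.two_lt_deg_left h hlk, hs.two_lt_deg_right h hlk⟩)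
    exact ⟨_, _, p, hp, hs.adj, hdeg⟩
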